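/- arXiv:2104.08870 — 2 statements merged into one kernel-verified Lean document; each statement's English description precedes it below -/
import Mathlib

section
/- Let γ > 1 and let μ₁, μ₂ be positive reals with 1/γ < μ₁/μ₂ < γ. Then there exist positive reals a and b such that (γ−1)·π·a·b·(a+b)/(a+γb) = μ₁ and (γ−1)·π·a·b·(a+b)/(b+γa) = μ₂. In other words, any pair of positive eigenvalues whose ratio lies strictly between 1/γ and γ is realized as the pair of eigenvalues of the Pólya–Szegő tensor of some coordinate-aligned ellipse with conductivity contrast γ. -/
/-- For `γ > 1`, any pair of positive eigenvalues `μ₁, μ₂` whose ratio lies strictly between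
`1/γ` and `γ` is realized as the pair of eigenvalues of the Pólya–Szegő tensor
`(γ−1)·|B|·diag((a+b)/(a+γb), (a+b)/(b+γa))`, `|B| = π·a·b`, of some coordinate-aligned
ellipse with semi-axes `a, b > 0` and conductivity contrast `γ`. -/
theorem polya_szego_eigenvalues_realizable
    (γ μ₁ μ₂ : ℝ) (hγ : 1 < γ) (hμ₁ : 0 < μ₁) (hμ₂ : 0 < μ₂)
    (hlo : 1 / γ < μ₁ / μ₂) (hhi : μ₁ / μ₂ < γ) :
    ∃ a b : ℝ, 0 < a ∧ 0 < b ∧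
      (γ - 1) * Real.pi * a * b * (a + b) / (a + γ * b) = μ₁ ∧
      (γ - 1) * Real.pi * a * b * (a + b) / (b + γ * a) = μ₂ := by
  have hγ0 : 0 < γ := by linarith
  have hp : 0 < γ * μ₁ - μ₂ := by
    rw [div_lt_div_iff₀ hγ0 hμ₂] at hlo
    linarith
  have hq : 0 < γ * μ₂ - μ₁ := by
    rw [div_lt_iff₀ hμ₂] at hhi
    linarith
  have hpi := Real.pi_pos
  have hγ1 : 0 < γ - 1 := by linarith
  have hγ2 : 0 < γ ^ 2 - 1 := by nlinarith
  obtain ⟨p, hpd⟩ : ∃ p, p = γ * μ₁ - μ₂ := ⟨_, rfl⟩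
  obtain ⟨q, hqd⟩ : ∃ q, q = γ * μ₂ - μ₁ := ⟨_, rfl⟩
  rw [← hpd] at hp
  rw [← hqd] at hq
  have hD : 0 < (γ - 1) * Real.pi * p * q * (p + q) := by positivity
  have hN : 0 < (γ ^ 2 - 1) * μ₁ * μ₂ := by positivity
  obtain ⟨s, hs, hs2⟩ : ∃ s : ℝ, 0 < s ∧
      s ^ 2 * ((γ - 1) * Real.pi * p * q * (p + q)) = (γ ^ 2 - 1) * μ₁ * μ₂ := by
    refine ⟨Real.sqrt (((γ ^ 2 - 1) * μ₁ * μ₂) / ((γ - 1) * Real.pi * p * q * (p + q))),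
      Real.sqrt_pos.mpr (div_pos hN hD), ?_⟩
    rw [Real.sq_sqrt (div_pos hN hD).le, div_mul_cancel₀ _ hD.ne']
  have e1 : s * p + γ * (s * q) = s * ((γ ^ 2 - 1) * μ₂) := by
    rw [hpd, hqd]; ring
  have e2 : s * q + γ * (s * p) = s * ((γ ^ 2 - 1) * μ₁) := by
    rw [hpd, hqd]; ring
  refine ⟨s * p, s * q, by positivity, by positivity, ?_, ?_⟩
  · rw [e1, div_eq_iff (by positivity)]
    linear_combination s * hs2
  · rw [e2, div_eq_iff (by positivity)]
    linear_combination s * hs2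
end

section
/- Let n be a finite type, let A, B₁, B₂ be n×n real matrices, and for real parameters s, r define S(s,r) = A + s·B₁ + r·B₂. Let t, h : n → ℝ be fixed vectors and define f(s,r) = tᵀ · S(s,r)⁻¹ · h. Suppose S(s₀,r₀) is invertible, and write S₀ = S(s₀,r₀). Then the mixed second partial derivative of f at (s₀,r₀), namely the derivative with respect to s at s₀ of the function s ↦ (derivative with respect to r at r₀ of r ↦ f(s,r)), equals tᵀ · S₀⁻¹ · ( B₂ · S₀⁻¹ · B₁ + B₁ · S₀⁻¹ · B₂ ) · S₀⁻¹ · h. -/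
open Matrix

section helpers

attribute [local instance] Matrix.linftyOpNormedRing Matrix.linftyOpNormedAlgebra

/-- The linear functional `M ↦ tᵀ M h`. -/
noncomputable def adjointFunctional {n : Type*} [Fintype n] [DecidableEq n] (t h : n → ℝ) :
    Matrix n n ℝ →L[ℝ] ℝ :=
  LinearMap.toContinuousLinearMap
    { toFun := fun M => t ⬝ᵥ (M *ᵥ h)
      map_add' := fun M N => by simp [Matrix.add_mulVec, dotProduct_add]
      map_smul' := fun c M => by simp [Matrix.smul_mulVec, dotProduct_smul] }

theorem adjointFunctional_apply {n : Type*} [Fintype n] [DecidableEq n] (t h : n → ℝ)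
    (M : Matrix n n ℝ) : adjointFunctional t h M = t ⬝ᵥ (M *ᵥ h) := rfl

theorem hasDerivAt_inv_line {n : Type*} [Fintype n] [DecidableEq n]
    (c : ℝ → Matrix n n ℝ) (B : Matrix n n ℝ) (x : ℝ) (hc : HasDerivAt c B x)
    (hu : IsUnit (c x)) :
    HasDerivAt (fun y => (c y)⁻¹) (-((c x)⁻¹ * B * (c x)⁻¹)) x := by
  obtain ⟨u, hu⟩ := hu
  have h1 := hasFDerivAt_ringInverse (𝕜 := ℝ) u
  rw [hu] at h1
  have h2 := h1.comp_hasDerivAt x hc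
  have e : (↑u⁻¹ : Matrix n n ℝ) = (c x)⁻¹ := by
    rw [← hu, Matrix.coe_units_inv]
  simp only [Matrix.nonsing_inv_eq_ringInverse] at e ⊢
  have h3 : HasDerivAt (Ring.inverse ∘ c) _ x := h2
  refine HasDerivAt.congr_deriv h3 ?_
  rw [← e]
  rfl

theorem mixed_aux {n : Type*} [Fintype n] [DecidableEq n]
    (A B₁ B₂ : Matrix n n ℝ) (t h : n → ℝ) (s₀ r₀ : ℝ)
    (hInv : IsUnit (A + s₀ • B₁ + r₀ • B₂)) :
    HasDerivAt
      (fun s : ℝ =>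
        deriv (fun r : ℝ => t ⬝ᵥ ((A + s • B₁ + r • B₂)⁻¹ *ᵥ h)) r₀)
      (t ⬝ᵥ ((A + s₀ • B₁ + r₀ • B₂)⁻¹ *ᵥ
        ((B₂ * (A + s₀ • B₁ + r₀ • B₂)⁻¹ * B₁ + B₁ * (A + s₀ • B₁ + r₀ • B₂)⁻¹ * B₂) *ᵥ
          ((A + s₀ • B₁ + r₀ • B₂)⁻¹ *ᵥ h)))) s₀ := by
  have hs : ∀ s : ℝ, HasDerivAt (fun s : ℝ => A + s • B₁ + r₀ • B₂) B₁ s := fun s => by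
    have h1 := (((hasDerivAt_id s).smul_const B₁).const_add A).add_const (r₀ • B₂)
    exact HasDerivAt.congr_deriv h1 (one_smul ℝ B₁)
  have hr : ∀ s r : ℝ, HasDerivAt (fun r : ℝ => A + s • B₁ + r • B₂) B₂ r := fun s r => by
    have h1 := ((hasDerivAt_id r).smul_const B₂).const_add (A + s • B₁)
    exact HasDerivAt.congr_deriv h1 (one_smul ℝ B₂)
  have hev : ∀ᶠ s in nhds s₀, IsUnit (A + s • B₁ + r₀ • B₂) :=
    (hs s₀).continuousAt.eventually (Units.isOpen.mem_nhds hInv)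
  have hi := hasDerivAt_inv_line _ _ _ (hs s₀) hInv
  have hd := (adjointFunctional t h).hasFDerivAt.comp_hasDerivAt s₀
    ((hi.mul_const B₂).mul hi).neg
  refine (hd.congr_of_eventuallyEq ?_).congr_deriv ?_
  · filter_upwards [hev] with s hsu
    have h3 := (adjointFunctional t h).hasFDerivAt.comp_hasDerivAt r₀
      (hasDerivAt_inv_line _ _ _ (hr s r₀) hsu)
    exact h3.deriv
  · refine (adjointFunctional_apply t h _).trans ?_
    simp only [Matrix.mulVec_mulVec]
    congr 2
    noncomm_ring

end helpers

/-- Adjoint-field formula for the mixed second derivative of a simulated datum when the system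
matrix depends affinely on the parameters: for `S(s,r) = A + s·B₁ + r·B₂` with `S₀ = S(s₀,r₀)`
invertible and `f(s,r) = tᵀ·S(s,r)⁻¹·h`, the derivative with respect to `s` at `s₀` of
`s ↦ ∂f/∂r (s, r₀)` equals `tᵀ·S₀⁻¹·(B₂·S₀⁻¹·B₁ + B₁·S₀⁻¹·B₂)·S₀⁻¹·h`. -/
theorem adjoint_field_mixed_second_derivative
    {n : Type*} [Fintype n] [DecidableEq n]
    (A B₁ B₂ : Matrix n n ℝ) (t h : n → ℝ) (s₀ r₀ : ℝ)
    (hInv : IsUnit (A + s₀ • B₁ + r₀ • B₂)) :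
    HasDerivAt
      (fun s : ℝ =>
        deriv (fun r : ℝ => t ⬝ᵥ ((A + s • B₁ + r • B₂)⁻¹ *ᵥ h)) r₀)
      (t ⬝ᵥ ((A + s₀ • B₁ + r₀ • B₂)⁻¹ *ᵥ
        ((B₂ * (A + s₀ • B₁ + r₀ • B₂)⁻¹ * B₁ + B₁ * (A + s₀ • B₁ + r₀ • B₂)⁻¹ * B₂) *ᵥ
          ((A + s₀ • B₁ + r₀ • B₂)⁻¹ *ᵥ h)))) s₀ := by
  exact mixed_aux A B₁ B₂ t h s₀ r₀ hInv
end
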